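/- arXiv:2502.12394 — 3 statements merged into one kernel-verified Lean document; each statement's English description precedes it below -/
import Mathlib

section
/- Let d be a positive integer and let 0 < a_1 < b_1 ≤ d and 0 < a_2 < b_2 ≤ d be integers with a_1 ≤ a_2 and b_1 ≤ b_2, where these two inequalities are not both equalities. Then ℓ_d^{(a_1,b_1)}(n) ≥ ℓ_d^{(a_2,b_2)}(n) for all integers n ≥ 1. -/
open Multiset Finset Filter

/-- A partition is encoded as a nonempty multiset of positive integers (its parts). -/
def IsPartition (M : Multiset ℕ) : Prop := M ≠ 0 ∧ ∀ x ∈ M, 0 < x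

/-- The perimeter of a partition: (largest part) + (number of parts) - 1. -/
def perim (M : Multiset ℕ) : ℕ := M.sup + Multiset.card M - 1

/-- `rP n P` counts the partitions (of any sum) with perimeter `n` satisfying `P`. -/
noncomputable def rP (n : ℕ) (P : Multiset ℕ → Prop) : ℕ :=
  Set.ncard {M : Multiset ℕ | IsPartition M ∧ perim M = n ∧ P M}

/-- `ellP d a b n`: partitions of perimeter n with every part ≡ a or ≡ b (mod d). -/
noncomputable def ellP (d a b n : ℕ) : ℕ :=
  rP n (fun M => ∀ x ∈ M, x % d = a % d ∨ x % d = b % d)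

/-!
Let `u ≤ v` be strictly increasing sequences of positive integers. Replacing every part `v i` of a
partition by `u i` keeps the number of parts and lowers the largest part `m` to some `m' ≤ m`;
adding `m - m'` further copies of `m'` restores the perimeter. The largest part of the result is
`m'`, which determines `m` and hence which copies were added, so this map is injective. The positive
integers congruent to `a` or `b` modulo `d` form the sequence `a, b, a + d, b + d, …`, which is
increasing since `0 < a < b ≤ d` and is monotone in `a` and `b`.
-/

theorem sup_mem_of_ne_zero {α : Type*} [LinearOrder α] [OrderBot α] {M : Multiset α} (hM : M ≠ 0) :
    M.sup ∈ M := by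
  obtain ⟨x, hx, hmax⟩ := Multiset.exists_max_image id hM
  rwa [le_antisymm (Multiset.sup_le.2 hmax) (Multiset.le_sup hx)]

theorem mem_of_mem_add_replicate_sup {α : Type*} [LinearOrder α] [OrderBot α] {M : Multiset α}
    {k : ℕ} {x : α} (hM : M ≠ 0) (hx : x ∈ M + Multiset.replicate k M.sup) : x ∈ M := by
  rcases Multiset.mem_add.1 hx with hx | hx
  · exact hx
  · exact Multiset.eq_of_mem_replicate hx ▸ sup_mem_of_ne_zero hM

theorem sup_map_of_monotoneOn {α β : Type*} [LinearOrder α] [OrderBot α] [SemilatticeSup β]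
    [OrderBot β] {f : α → β} {M : Multiset α} (hf : MonotoneOn f {x | x ∈ M}) (hM : M ≠ 0) :
    (M.map f).sup = f M.sup := by
  have hsup := sup_mem_of_ne_zero hM
  refine le_antisymm (Multiset.sup_le.2 fun y hy ↦ ?_)
    (Multiset.le_sup (Multiset.mem_map_of_mem f hsup))
  obtain ⟨x, hx, rfl⟩ := Multiset.mem_map.1 hy
  exact hf hx hsup (Multiset.le_sup hx)

theorem injOn_multiset_map {α β : Type*} {f : α → β} {S : Set α} (hf : Set.InjOn f S) :
    Set.InjOn (Multiset.map f) {M | ∀ x ∈ M, x ∈ S} := by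
  intro M hM N hN h
  lift M to Multiset S using hM
  lift N to Multiset S using hN
  rw [Multiset.map_map, Multiset.map_map] at h
  rw [Multiset.map_injective hf.injective h]

theorem sup_le_perim {M : Multiset ℕ} (hM : M ≠ 0) : M.sup ≤ perim M := by
  have := Multiset.card_pos.2 hM
  unfold perim
  omega

theorem IsPartition.card_le_perim {M : Multiset ℕ} (hM : IsPartition M) : M.card ≤ perim M := by
  have := hM.2 _ (sup_mem_of_ne_zero hM.1)
  unfold perim
  omega

theorem finite_setOf_isPartition_perim_eq (n : ℕ) : {M | IsPartition M ∧ perim M = n}.Finite := by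
  refine (Set.finite_Iic (n • Multiset.range (n + 1))).subset ?_
  rintro M ⟨hM, rfl⟩
  refine Multiset.le_iff_count.2 fun x ↦ ?_
  by_cases hx : x ∈ M
  · have hx_range : x ∈ Multiset.range (perim M + 1) :=
      Multiset.mem_range.2 (Nat.lt_succ_of_le <| (Multiset.le_sup hx).trans (sup_le_perim hM.1))
    rw [Multiset.count_nsmul, Multiset.count_eq_one_of_mem (Multiset.nodup_range _) hx_range,
      mul_one]
    exact (Multiset.count_le_card x M).trans hM.card_le_perim
  · simp [Multiset.count_eq_zero_of_notMem hx]

/-- The partition obtained from `M` by applying `f` to every part and then adjoining copies of the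
largest part, as many as are needed to keep the perimeter when `f` is monotone and lowers the
largest part. The copies are adjoined before `f` is applied, so that the result is the image of a
multiset under `f`. -/
def perimMap (f : ℕ → ℕ) (M : Multiset ℕ) : Multiset ℕ :=
  (M + Multiset.replicate (M.sup - f M.sup) M.sup).map f

section perimMap

variable {f : ℕ → ℕ} {M : Multiset ℕ}

theorem perimMap_ne_zero (hM : M ≠ 0) : perimMap f M ≠ 0 := by
  simp [perimMap, hM]

theorem exists_of_mem_perimMap (hM : M ≠ 0) {y : ℕ} (hy : y ∈ perimMap f M) :
    ∃ x ∈ M, f x = y := by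
  obtain ⟨x, hx, hxy⟩ := Multiset.mem_map.1 hy
  exact ⟨x, mem_of_mem_add_replicate_sup hM hx, hxy⟩

theorem sup_perimMap (hf : MonotoneOn f {x | x ∈ M}) (hM : M ≠ 0) :
    (perimMap f M).sup = f M.sup := by
  have hsup : (M + Multiset.replicate (M.sup - f M.sup) M.sup).sup = M.sup :=
    le_antisymm
      (Multiset.sup_le.2 fun _ hx ↦ Multiset.le_sup (mem_of_mem_add_replicate_sup hM hx))
      (Multiset.sup_mono (Multiset.subset_of_le (Multiset.le_add_right _ _)))
  rw [perimMap, sup_map_of_monotoneOn (hf.mono fun _ ↦ mem_of_mem_add_replicate_sup hM)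
    (by simp [hM]), hsup]

theorem perim_perimMap (hf : MonotoneOn f {x | x ∈ M}) (hM : M ≠ 0) (hle : f M.sup ≤ M.sup) :
    perim (perimMap f M) = perim M := by
  have hcard : (perimMap f M).card = M.card + (M.sup - f M.sup) := by simp [perimMap]
  rw [perim, perim, sup_perimMap hf hM, hcard]
  omega

theorem injOn_perimMap {S : Set ℕ} (hf : StrictMonoOn f S) :
    Set.InjOn (perimMap f) {M | M ≠ 0 ∧ ∀ x ∈ M, x ∈ S} := by
  rintro M ⟨hM, hMS⟩ N ⟨hN, hNS⟩ h
  have hsup : M.sup = N.sup := by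
    apply hf.injOn (hMS _ (sup_mem_of_ne_zero hM)) (hNS _ (sup_mem_of_ne_zero hN))
    rw [← sup_perimMap (hf.monotoneOn.mono hMS) hM, h, sup_perimMap (hf.monotoneOn.mono hNS) hN]
  have hadd := injOn_multiset_map hf.injOn
    (fun x hx ↦ hMS x (mem_of_mem_add_replicate_sup hM hx))
    (fun x hx ↦ hNS x (mem_of_mem_add_replicate_sup hN hx)) h
  rw [hsup] at hadd
  exact add_right_cancel hadd

end perimMap

theorem rP_mem_le_rP_mem_of_strictMonoOn {S T : Set ℕ} {f : ℕ → ℕ} (hf : StrictMonoOn f S)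
    (hST : Set.MapsTo f S T) (hpos : ∀ x ∈ S, 0 < f x) (hle : ∀ x ∈ S, f x ≤ x) (n : ℕ) :
    rP n (fun M ↦ ∀ x ∈ M, x ∈ S) ≤ rP n (fun M ↦ ∀ x ∈ M, x ∈ T) := by
  have hfinite : {M | IsPartition M ∧ perim M = n ∧ ∀ x ∈ M, x ∈ T}.Finite := by
    refine (finite_setOf_isPartition_perim_eq n).subset ?_
    rintro M ⟨hM, hperim, -⟩
    exact ⟨hM, hperim⟩
  have hinj : Set.InjOn (perimMap f) {M | IsPartition M ∧ perim M = n ∧ ∀ x ∈ M, x ∈ S} := by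
    refine (injOn_perimMap hf).mono ?_
    rintro M ⟨hM, -, hMS⟩
    exact ⟨hM.1, hMS⟩
  refine Set.ncard_le_ncard_of_injOn (perimMap f) ?_ hinj hfinite
  rintro M ⟨⟨hM, -⟩, rfl, hMS⟩
  have hparts : ∀ y ∈ perimMap f M, 0 < y ∧ y ∈ T := by
    intro y hy
    obtain ⟨x, hx, rfl⟩ := exists_of_mem_perimMap hM hy
    exact ⟨hpos x (hMS x hx), hST (hMS x hx)⟩
  have hperim : perim (perimMap f M) = perim M :=
    perim_perimMap (hf.monotoneOn.mono hMS) hM (hle _ (hMS _ (sup_mem_of_ne_zero hM)))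
  exact ⟨⟨perimMap_ne_zero hM, fun y hy ↦ (hparts y hy).1⟩, hperim, fun y hy ↦ (hparts y hy).2⟩

theorem rP_mem_range_anti {ι : Type*} [LinearOrder ι] {u v : ι → ℕ} (hu : StrictMono u)
    (hv : StrictMono v) (hpos : ∀ i, 0 < u i) (huv : u ≤ v) (n : ℕ) :
    rP n (fun M ↦ ∀ x ∈ M, x ∈ Set.range v) ≤ rP n (fun M ↦ ∀ x ∈ M, x ∈ Set.range u) := by
  have hf (i : ι) : Function.extend v u id (v i) = u i := hv.injective.extend_apply u id i
  refine rP_mem_le_rP_mem_of_strictMonoOn (f := Function.extend v u id) ?_ ?_ ?_ ?_ n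
  · rintro _ ⟨i, rfl⟩ _ ⟨j, rfl⟩ hij
    rw [hf, hf]
    exact hu (hv.lt_iff_lt.1 hij)
  · rintro _ ⟨i, rfl⟩
    exact ⟨i, (hf i).symm⟩
  · rintro _ ⟨i, rfl⟩
    exact hf i ▸ hpos i
  · rintro _ ⟨i, rfl⟩
    exact hf i ▸ huv i

/-- The sequence `a, b, a + d, b + d, a + 2 * d, …`, which for `0 < a < b ≤ d` enumerates the
positive integers congruent to `a` or `b` modulo `d` in increasing order. -/
def residueSeq (d a b k : ℕ) : ℕ := (if Even k then a else b) + d * (k / 2)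

section residueSeq

variable {d a b : ℕ}

theorem residueSeq_two_mul (i : ℕ) : residueSeq d a b (2 * i) = a + d * i := by
  simp [residueSeq]

theorem residueSeq_two_mul_add_one (i : ℕ) : residueSeq d a b (2 * i + 1) = b + d * i := by
  have : (2 * i + 1) / 2 = i := by omega
  simp [residueSeq, this]

theorem residueSeq_pos (ha : 0 < a) (hb : 0 < b) (k : ℕ) : 0 < residueSeq d a b k := by
  unfold residueSeq
  split_ifs <;> omega

theorem residueSeq_mono {a' b' : ℕ} (ha : a ≤ a') (hb : b ≤ b') :
    residueSeq d a b ≤ residueSeq d a' b' := by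
  intro k
  unfold residueSeq
  split_ifs <;> gcongr

theorem strictMono_residueSeq (hab : a < b) (hba : b < a + d) : StrictMono (residueSeq d a b) := by
  refine strictMono_nat_of_lt_succ fun k ↦ ?_
  obtain ⟨i, rfl | rfl⟩ := k.even_or_odd'
  · rw [residueSeq_two_mul, residueSeq_two_mul_add_one]
    gcongr
  · rw [show 2 * i + 1 + 1 = 2 * (i + 1) by ring, residueSeq_two_mul, residueSeq_two_mul_add_one,
      mul_add_one]
    omega

theorem pos_and_mod_eq_iff_exists_add_mul {c x : ℕ} (hc : 0 < c) (hcd : c ≤ d) :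
    0 < x ∧ x % d = c % d ↔ ∃ i, c + d * i = x := by
  constructor
  · rintro ⟨hx, hmod⟩
    have hcx : c ≡ x [MOD d] := hmod.symm
    have hle : c ≤ x := hcx.le_of_lt_add (by omega)
    obtain ⟨i, hi⟩ := (Nat.modEq_iff_dvd' hle).1 hcx
    exact ⟨i, by omega⟩
  · rintro ⟨i, rfl⟩
    exact ⟨by omega, Nat.add_mul_mod_self_left c d i⟩

theorem mem_range_residueSeq {x : ℕ} (ha : 0 < a) (had : a ≤ d) (hb : 0 < b) (hbd : b ≤ d) :
    x ∈ Set.range (residueSeq d a b) ↔ 0 < x ∧ (x % d = a % d ∨ x % d = b % d) := by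
  rw [and_or_left, pos_and_mod_eq_iff_exists_add_mul ha had,
    pos_and_mod_eq_iff_exists_add_mul hb hbd]
  constructor
  · rintro ⟨k, rfl⟩
    obtain ⟨i, rfl | rfl⟩ := k.even_or_odd'
    · exact Or.inl ⟨i, (residueSeq_two_mul i).symm⟩
    · exact Or.inr ⟨i, (residueSeq_two_mul_add_one i).symm⟩
  · rintro (⟨i, rfl⟩ | ⟨i, rfl⟩)
    · exact ⟨2 * i, residueSeq_two_mul i⟩
    · exact ⟨2 * i + 1, residueSeq_two_mul_add_one i⟩

end residueSeq

theorem rP_congr {P Q : Multiset ℕ → Prop} (h : ∀ M, IsPartition M → (P M ↔ Q M)) (n : ℕ) :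
    rP n P = rP n Q := by
  unfold rP
  congr 1 with M
  exact and_congr_right fun hM ↦ and_congr_right fun _ ↦ h M hM

theorem ellP_eq_rP_mem_range_residueSeq {d a b : ℕ} (ha : 0 < a) (had : a ≤ d) (hb : 0 < b)
    (hbd : b ≤ d) (n : ℕ) :
    ellP d a b n = rP n (fun M ↦ ∀ x ∈ M, x ∈ Set.range (residueSeq d a b)) := by
  refine rP_congr (fun M hM ↦ forall₂_congr fun x hx ↦ ?_) n
  rw [mem_range_residueSeq ha had hb hbd, and_iff_right (hM.2 x hx)]

theorem stmt_5 (d a₁ b₁ a₂ b₂ : ℕ) (hd : 1 ≤ d)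
    (ha₁ : 0 < a₁) (hab₁ : a₁ < b₁) (hb₁ : b₁ ≤ d)
    (ha₂ : 0 < a₂) (hab₂ : a₂ < b₂) (hb₂ : b₂ ≤ d)
    (haa : a₁ ≤ a₂) (hbb : b₁ ≤ b₂) (hne : ¬(a₁ = a₂ ∧ b₁ = b₂))
    (n : ℕ) (hn : 1 ≤ n) :
    ellP d a₂ b₂ n ≤ ellP d a₁ b₁ n := by
  have hb₁_pos : 0 < b₁ := ha₁.trans hab₁
  have hb₂_pos : 0 < b₂ := ha₂.trans hab₂
  rw [ellP_eq_rP_mem_range_residueSeq ha₁ (by omega) hb₁_pos hb₁,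
    ellP_eq_rP_mem_range_residueSeq ha₂ (by omega) hb₂_pos hb₂]
  exact rP_mem_range_anti (strictMono_residueSeq hab₁ (by omega))
    (strictMono_residueSeq hab₂ (by omega)) (residueSeq_pos ha₁ hb₁_pos)
    (residueSeq_mono haa hbb) n
end

section
/- Let d be a positive integer and let 0 < a_1 < b_1 ≤ d and 0 < a_2 < b_2 ≤ d be integers with a_1 ≤ a_2 and b_1 ≤ b_2, where these two inequalities are not both equalities. Then ℓ_d^{(a_1,b_1)}(n) − ℓ_d^{(a_2,b_2)}(n) tends to +∞ as n → ∞. -/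
open Multiset Finset Filter

/-!
Let `φ` map the admissible parts `T` into the admissible parts `S`, strictly monotone and with
`φ x ≤ x`. Applying `φ` to all parts of a partition lowers its perimeter by the drop of the largest
part; adding that many copies of the least element `c` of `S` restores it, and this is injective.
If `φ t < t`, every image with largest part `φ t` contains the part `c`. Hence, for `s ∈ S` with
`c < s < φ t`, the partitions of perimeter `n` with largest part `φ t` and all other parts in
`{s, φ t}` are missed, and there are `n + 1 - φ t` of them.
-/

section Multisets

variable {α β : Type*}

theorem multiset_sup_mem [LinearOrder α] [OrderBot α] {M : Multiset α} (hM : M ≠ 0) :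
    M.sup ∈ M := by
  obtain ⟨x, hx, hsup⟩ := M.toFinset.exists_mem_eq_sup (toFinset_nonempty.2 hM) id
  rw [Finset.sup_def, toFinset_val, Multiset.map_id, sup_dedup] at hsup
  exact hsup ▸ mem_toFinset.1 hx

theorem multiset_sup_map_of_monotoneOn [LinearOrder α] [OrderBot α] [SemilatticeSup β] [OrderBot β]
    {φ : α → β} {T : Set α} (hφ : MonotoneOn φ T) {M : Multiset α} (hM : M ≠ 0)
    (hMT : ∀ x ∈ M, x ∈ T) : (M.map φ).sup = φ M.sup := by
  have hsup := multiset_sup_mem hM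
  refine le_antisymm (Multiset.sup_le.2 fun y hy => ?_) (le_sup (mem_map_of_mem φ hsup))
  obtain ⟨x, hx, rfl⟩ := mem_map.1 hy
  exact hφ (hMT x hx) (hMT _ hsup) (le_sup hx)

theorem multiset_map_injOn {φ : α → β} {T : Set α} (hφ : T.InjOn φ) :
    {M : Multiset α | ∀ x ∈ M, x ∈ T}.InjOn (Multiset.map φ) := by
  rcases isEmpty_or_nonempty α with _ | _
  · exact Set.injOn_of_subsingleton _ _
  refine Set.LeftInvOn.injOn (f₁' := Multiset.map (Function.invFunOn φ T)) fun M hM => ?_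
  rw [Multiset.map_map]
  exact (map_congr rfl fun x hx => hφ.leftInvOn_invFunOn (hM x hx)).trans M.map_id

end Multisets

section Partitions

variable {S T : Set ℕ} {φ : ℕ → ℕ} {c s t u n N : ℕ} {M : Multiset ℕ}

/-- The partitions of perimeter `n` with all parts in `S`. -/
def perimPartitions (S : Set ℕ) (n : ℕ) : Set (Multiset ℕ) :=
  {M | IsPartition M ∧ perim M = n ∧ ∀ x ∈ M, x ∈ S}

theorem mem_perimPartitions_iff :
    M ∈ perimPartitions S n ↔
      IsPartition M ∧ M.sup + Multiset.card M = n + 1 ∧ ∀ x ∈ M, x ∈ S := by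
  refine and_congr_right fun hM => and_congr_left' ?_
  have := Multiset.card_pos.2 hM.1
  rw [perim]
  omega

theorem finite_perimPartitions (S : Set ℕ) (n : ℕ) : (perimPartitions S n).Finite := by
  refine (Set.finite_Iic ((n + 1) • Multiset.range (n + 2))).subset fun M hM => ?_
  obtain ⟨-, hperim, -⟩ := mem_perimPartitions_iff.1 hM
  refine Multiset.le_iff_count.2 fun x => ?_
  by_cases hx : x ∈ M
  · have hx_le := le_sup hx
    have hx_range : x ∈ Multiset.range (n + 2) := Multiset.mem_range.2 (by omega)
    rw [count_nsmul, count_eq_one_of_mem (nodup_range _) hx_range]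
    have := count_le_card x M
    omega
  · simp only [count_eq_zero_of_notMem hx, Nat.zero_le]

/-- Apply `φ` to every part and restore the perimeter, when `φ` lowers the largest part, by adding
copies of `c`. -/
def mapPad (φ : ℕ → ℕ) (c : ℕ) (M : Multiset ℕ) : Multiset ℕ :=
  M.map φ + replicate (M.sup - φ M.sup) c

theorem mem_or_eq_of_mem_mapPad {y : ℕ} (hy : y ∈ mapPad φ c M) :
    (∃ x ∈ M, φ x = y) ∨ y = c :=
  (mem_add.1 hy).imp mem_map.1 eq_of_mem_replicate

theorem sup_mapPad (hφ : MonotoneOn φ T) (hc : ∀ x ∈ T, c ≤ φ x) (hM : M ≠ 0)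
    (hMT : ∀ x ∈ M, x ∈ T) : (mapPad φ c M).sup = φ M.sup := by
  rw [mapPad, Multiset.sup_add, multiset_sup_map_of_monotoneOn hφ hM hMT, sup_eq_left,
    Multiset.sup_le]
  intro x hx
  exact eq_of_mem_replicate hx ▸ hc _ (hMT _ (multiset_sup_mem hM))

theorem card_mapPad : Multiset.card (mapPad φ c M) = Multiset.card M + (M.sup - φ M.sup) := by
  rw [mapPad, card_add, Multiset.card_map, card_replicate]

theorem mapPad_mem_perimPartitions (hφ : MonotoneOn φ T) (hφ_le : ∀ x ∈ T, φ x ≤ x)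
    (hφS : Set.MapsTo φ T S) (hc : IsLeast S c) (hc_pos : 0 < c) (hM : M ∈ perimPartitions T n) :
    mapPad φ c M ∈ perimPartitions S n := by
  obtain ⟨⟨hM₀, -⟩, hperim, hMT⟩ := mem_perimPartitions_iff.1 hM
  have hparts : ∀ y ∈ mapPad φ c M, y ∈ S := by
    intro y hy
    obtain ⟨x, hx, rfl⟩ | rfl := mem_or_eq_of_mem_mapPad hy
    exacts [hφS (hMT x hx), hc.1]
  have hsup_le := hφ_le _ (hMT _ (multiset_sup_mem hM₀))
  refine mem_perimPartitions_iff.2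
    ⟨⟨?_, fun y hy => hc_pos.trans_le (hc.2 (hparts y hy))⟩, ?_, hparts⟩
  · rw [← Multiset.card_pos, card_mapPad]
    exact Nat.add_pos_left (Multiset.card_pos.2 hM₀) _
  · rw [sup_mapPad hφ (fun x hx => hc.2 (hφS hx)) hM₀ hMT, card_mapPad]
    omega

-- The largest part of `mapPad φ c M` determines that of `M`, hence the number of added parts.
theorem mapPad_injOn (hφ : StrictMonoOn φ T) (hc : ∀ x ∈ T, c ≤ φ x) :
    (perimPartitions T n).InjOn (mapPad φ c) := by
  rintro M ⟨⟨hM₀, -⟩, -, hMT⟩ M' ⟨⟨hM₀', -⟩, -, hMT'⟩ h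
  have hsup : M.sup = M'.sup := by
    refine hφ.injOn (hMT _ (multiset_sup_mem hM₀)) (hMT' _ (multiset_sup_mem hM₀')) ?_
    rw [← sup_mapPad hφ.monotoneOn hc hM₀ hMT, h, sup_mapPad hφ.monotoneOn hc hM₀' hMT']
  rw [mapPad, mapPad, hsup] at h
  exact multiset_map_injOn hφ.injOn hMT hMT' (add_right_cancel h)

theorem mem_mapPad_of_sup_eq (hφ : StrictMonoOn φ T) (hc : ∀ x ∈ T, c ≤ φ x)
    (hM : M ∈ perimPartitions T n) (ht : t ∈ T) (hφt : φ t < t)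
    (hsup : (mapPad φ c M).sup = φ t) : c ∈ mapPad φ c M := by
  obtain ⟨⟨hM₀, -⟩, -, hMT⟩ := hM
  rw [sup_mapPad hφ.monotoneOn hc hM₀ hMT] at hsup
  have hMt : M.sup = t := hφ.injOn (hMT _ (multiset_sup_mem hM₀)) ht hsup
  exact mem_add.2 (.inr (mem_replicate.2 ⟨by omega, rfl⟩))

/-- The multiset of `N` parts consisting of `j` copies of `s` and `N - j` copies of `u`. -/
def twoValued (s u N j : ℕ) : Multiset ℕ := replicate j s + replicate (N - j) u

theorem eq_or_eq_of_mem_twoValued {j x : ℕ} (hx : x ∈ twoValued s u N j) : x = s ∨ x = u :=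
  (mem_add.1 hx).imp eq_of_mem_replicate eq_of_mem_replicate

theorem twoValued_injective (hsu : s ≠ u) : Function.Injective (twoValued s u N) := by
  intro i j h
  simpa [twoValued, count_replicate, hsu.symm] using congrArg (count s) h

theorem sup_twoValued {j : ℕ} (hsu : s ≤ u) (hj : j < N) : (twoValued s u N j).sup = u := by
  refine le_antisymm (Multiset.sup_le.2 fun x hx => ?_) (le_sup ?_)
  · obtain rfl | rfl := eq_or_eq_of_mem_twoValued hx
    exacts [hsu, le_rfl]
  · exact mem_add.2 (.inr (mem_replicate.2 ⟨by omega, rfl⟩))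

theorem card_twoValued {j : ℕ} (hj : j ≤ N) : Multiset.card (twoValued s u N j) = N := by
  rw [twoValued, card_add, card_replicate, card_replicate, Nat.add_sub_cancel' hj]

theorem twoValued_mem_perimPartitions (hs : s ∈ S) (hu : u ∈ S) (hs_pos : 0 < s) (hsu : s ≤ u)
    {j : ℕ} (hj : j < n + 1 - u) : twoValued s u (n + 1 - u) j ∈ perimPartitions S n := by
  refine mem_perimPartitions_iff.2 ⟨⟨?_, fun x hx => ?_⟩, ?_, fun x hx => ?_⟩
  · rw [← Multiset.card_pos, card_twoValued hj.le]
    omega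
  · obtain rfl | rfl := eq_or_eq_of_mem_twoValued hx
    exacts [hs_pos, hs_pos.trans_le hsu]
  · rw [sup_twoValued hsu hj, card_twoValued hj.le]
    omega
  · obtain rfl | rfl := eq_or_eq_of_mem_twoValued hx
    exacts [hs, hu]

theorem disjoint_image_mapPad_image_twoValued (hφ : StrictMonoOn φ T) (hc : ∀ x ∈ T, c ≤ φ x)
    (ht : t ∈ T) (hφt : φ t < t) (hcs : c < s) (hst : s ≤ φ t) :
    Disjoint (mapPad φ c '' perimPartitions T n) (twoValued s (φ t) N '' Set.Iio N) := by
  rw [Set.disjoint_left]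
  rintro _ ⟨M, hM, rfl⟩ ⟨j, hj, h⟩
  have hmem : c ∈ twoValued s (φ t) N j :=
    h ▸ mem_mapPad_of_sup_eq hφ hc hM ht hφt (h ▸ sup_twoValued hst hj)
  obtain h | h := eq_or_eq_of_mem_twoValued hmem <;> omega

theorem ncard_perimPartitions_add_le (hφ : StrictMonoOn φ T) (hφ_le : ∀ x ∈ T, φ x ≤ x)
    (hφS : Set.MapsTo φ T S) (hc : IsLeast S c) (hc_pos : 0 < c) (hs : s ∈ S) (ht : t ∈ T)
    (hcs : c < s) (hst : s < φ t) (hφt : φ t < t) (n : ℕ) :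
    (perimPartitions T n).ncard + (n + 1 - φ t) ≤ (perimPartitions S n).ncard := by
  have hc_le : ∀ x ∈ T, c ≤ φ x := fun x hx => hc.2 (hφS hx)
  have hpad : mapPad φ c '' perimPartitions T n ⊆ perimPartitions S n :=
    Set.image_subset_iff.2 fun M =>
      mapPad_mem_perimPartitions hφ.monotoneOn hφ_le hφS hc hc_pos
  have htwo : twoValued s (φ t) (n + 1 - φ t) '' Set.Iio (n + 1 - φ t) ⊆ perimPartitions S n :=
    Set.image_subset_iff.2 fun j hj =>
      twoValued_mem_perimPartitions hs (hφS ht) (hc_pos.trans hcs) hst.le hj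
  have hfin := finite_perimPartitions S n
  calc (perimPartitions T n).ncard + (n + 1 - φ t)
      = (mapPad φ c '' perimPartitions T n).ncard
          + (twoValued s (φ t) (n + 1 - φ t) '' Set.Iio (n + 1 - φ t)).ncard := by
        rw [(mapPad_injOn hφ hc_le).ncard_image,
          Set.ncard_image_of_injective _ (twoValued_injective hst.ne), Set.ncard_Iio_nat]
    _ = (mapPad φ c '' perimPartitions T n
          ∪ twoValued s (φ t) (n + 1 - φ t) '' Set.Iio (n + 1 - φ t)).ncard :=
        (Set.ncard_union_eq (disjoint_image_mapPad_image_twoValued hφ hc_le ht hφt hcs hst.le)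
          (hfin.subset hpad) (hfin.subset htwo)).symm
    _ ≤ (perimPartitions S n).ncard := Set.ncard_le_ncard (Set.union_subset hpad htwo) hfin

theorem stmt_6_general (hφ : StrictMonoOn φ T) (hφ_le : ∀ x ∈ T, φ x ≤ x)
    (hφS : Set.MapsTo φ T S) (hc : IsLeast S c) (hc_pos : 0 < c) (hs : s ∈ S) (ht : t ∈ T)
    (hcs : c < s) (hst : s < φ t) (hφt : φ t < t) :
    Tendsto (fun n => (rP n (fun M => ∀ x ∈ M, x ∈ S) : ℤ) - (rP n (fun M => ∀ x ∈ M, x ∈ T) : ℤ))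
      atTop atTop := by
  have hbound (n : ℕ) : ((n + 1 - φ t : ℕ) : ℤ) ≤
      (rP n (fun M => ∀ x ∈ M, x ∈ S) : ℤ) - (rP n (fun M => ∀ x ∈ M, x ∈ T) : ℤ) := by
    have : rP n (fun M => ∀ x ∈ M, x ∈ T) + (n + 1 - φ t) ≤ rP n (fun M => ∀ x ∈ M, x ∈ S) :=
      ncard_perimPartitions_add_le hφ hφ_le hφS hc hc_pos hs ht hcs hst hφt n
    omega
  refine tendsto_atTop_mono hbound (tendsto_natCast_atTop_atTop.comp ?_)
  exact (tendsto_sub_atTop_nat (φ t)).comp (tendsto_add_atTop_nat 1)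

end Partitions

section Residues

variable {d a b a₁ b₁ a₂ b₂ x : ℕ}

/-- The numbers `a + j * d` and `b + j * d`: for `0 < a, b ≤ d`, these are the positive integers
congruent to `a` or `b` modulo `d`. -/
def residueParts (d a b : ℕ) : Set ℕ := {x | ∃ j, x = a + j * d ∨ x = b + j * d}

theorem mod_eq_mod_iff_exists_add_mul (had : a ≤ d) (hx : 0 < x) :
    x % d = a % d ↔ ∃ j, x = a + j * d := by
  refine ⟨fun h => ?_, by rintro ⟨j, rfl⟩; exact Nat.add_mul_mod_self_right a j d⟩
  have hax : a ≤ x := by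
    by_contra! hxa
    have : x % d = x := Nat.mod_eq_of_lt (by omega)
    obtain rfl | had := had.eq_or_lt
    · rw [Nat.mod_self] at h
      omega
    · rw [Nat.mod_eq_of_lt had] at h
      omega
  obtain ⟨j, hj⟩ := (Nat.modEq_iff_exists_eq_add hax).1 (show a ≡ x [MOD d] from h.symm)
  exact ⟨j, by rw [hj, mul_comm]⟩

theorem ellP_eq_rP_residueParts (had : a ≤ d) (hbd : b ≤ d) (n : ℕ) :
    ellP d a b n = rP n (fun M => ∀ x ∈ M, x ∈ residueParts d a b) := by
  refine congrArg Set.ncard (Set.ext fun M => ?_)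
  refine and_congr_right fun hM => and_congr_right' (forall₂_congr fun x hx => ?_)
  rw [mod_eq_mod_iff_exists_add_mul had (hM.2 x hx),
    mod_eq_mod_iff_exists_add_mul hbd (hM.2 x hx), ← exists_or]
  rfl

theorem isLeast_residueParts (hab : a ≤ b) : IsLeast (residueParts d a b) a := by
  refine ⟨⟨0, by simp⟩, ?_⟩
  rintro _ ⟨j, rfl | rfl⟩ <;> omega

/-- The map `a₂ + j * d ↦ a₁ + j * d`, `b₂ + j * d ↦ b₁ + j * d` between the sets `residueParts`,
extended to all of `ℕ`. -/
def residueShift (d a₁ b₁ a₂ b₂ x : ℕ) : ℕ :=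
  if x % d = a₂ % d then x - (a₂ - a₁) else x - (b₂ - b₁)

theorem residueShift_add_mul_left (haa : a₁ ≤ a₂) (j : ℕ) :
    residueShift d a₁ b₁ a₂ b₂ (a₂ + j * d) = a₁ + j * d := by
  rw [residueShift, if_pos (Nat.add_mul_mod_self_right a₂ j d)]
  omega

theorem residueShift_add_mul_right (ha₂ : 0 < a₂) (hab₂ : a₂ < b₂) (hb₂ : b₂ ≤ d) (hbb : b₁ ≤ b₂)
    (j : ℕ) : residueShift d a₁ b₁ a₂ b₂ (b₂ + j * d) = b₁ + j * d := by
  have hne : (b₂ + j * d) % d ≠ a₂ % d := by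
    rw [Nat.add_mul_mod_self_right, Nat.mod_eq_of_lt (hab₂.trans_le hb₂)]
    obtain rfl | hb₂ := hb₂.eq_or_lt
    · rw [Nat.mod_self]
      exact ha₂.ne
    · rw [Nat.mod_eq_of_lt hb₂]
      exact hab₂.ne'
  rw [residueShift, if_neg hne]
  omega

theorem residueShift_mapsTo (ha₂ : 0 < a₂) (hab₂ : a₂ < b₂) (hb₂ : b₂ ≤ d) (haa : a₁ ≤ a₂)
    (hbb : b₁ ≤ b₂) :
    Set.MapsTo (residueShift d a₁ b₁ a₂ b₂) (residueParts d a₂ b₂) (residueParts d a₁ b₁) := by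
  rintro _ ⟨j, rfl | rfl⟩
  · exact ⟨j, .inl (residueShift_add_mul_left haa j)⟩
  · exact ⟨j, .inr (residueShift_add_mul_right ha₂ hab₂ hb₂ hbb j)⟩

theorem residueShift_le : residueShift d a₁ b₁ a₂ b₂ x ≤ x := by
  unfold residueShift
  split_ifs <;> exact Nat.sub_le _ _

theorem residueShift_strictMonoOn (hab₁ : a₁ < b₁) (hb₁ : b₁ < a₁ + d) (ha₂ : 0 < a₂)
    (hab₂ : a₂ < b₂) (hb₂ : b₂ ≤ d) (haa : a₁ ≤ a₂) (hbb : b₁ ≤ b₂) :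
    StrictMonoOn (residueShift d a₁ b₁ a₂ b₂) (residueParts d a₂ b₂) := by
  rintro _ ⟨i, rfl | rfl⟩ _ ⟨j, rfl | rfl⟩ h <;>
    simp only [residueShift_add_mul_left haa, residueShift_add_mul_right ha₂ hab₂ hb₂ hbb]
  · omega
  · have hij : i < j + 1 := Nat.lt_of_mul_lt_mul_right (a := d) (by rw [add_one_mul]; omega)
    have := Nat.mul_le_mul_right d (Nat.le_of_lt_succ hij)
    omega
  · have hij : i < j := Nat.lt_of_mul_lt_mul_right (a := d) (by omega)
    have := Nat.mul_le_mul_right d (Nat.succ_le_of_lt hij)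
    rw [Nat.succ_mul] at this
    omega
  · omega

theorem exists_residueShift_lt (hb₁ : b₁ < a₁ + d) (ha₂ : 0 < a₂) (hab₂ : a₂ < b₂)
    (hb₂ : b₂ ≤ d) (haa : a₁ ≤ a₂) (hbb : b₁ ≤ b₂) (hne : ¬(a₁ = a₂ ∧ b₁ = b₂)) :
    ∃ t ∈ residueParts d a₂ b₂,
      b₁ < residueShift d a₁ b₁ a₂ b₂ t ∧ residueShift d a₁ b₁ a₂ b₂ t < t := by
  by_cases h : a₁ = a₂
  · refine ⟨b₂ + 1 * d, ⟨1, .inr rfl⟩, ?_⟩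
    rw [residueShift_add_mul_right ha₂ hab₂ hb₂ hbb]
    omega
  · refine ⟨a₂ + 1 * d, ⟨1, .inl rfl⟩, ?_⟩
    rw [residueShift_add_mul_left haa]
    omega

end Residues

theorem stmt_6 (d a₁ b₁ a₂ b₂ : ℕ) (hd : 1 ≤ d)
    (ha₁ : 0 < a₁) (hab₁ : a₁ < b₁) (hb₁ : b₁ ≤ d)
    (ha₂ : 0 < a₂) (hab₂ : a₂ < b₂) (hb₂ : b₂ ≤ d)
    (haa : a₁ ≤ a₂) (hbb : b₁ ≤ b₂) (hne : ¬(a₁ = a₂ ∧ b₁ = b₂)) :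
    Tendsto (fun n => (ellP d a₁ b₁ n : ℤ) - (ellP d a₂ b₂ n : ℤ)) atTop atTop := by
  have hb₁_lt : b₁ < a₁ + d := by omega
  obtain ⟨t, ht, hbt, hφt⟩ := exists_residueShift_lt hb₁_lt ha₂ hab₂ hb₂ haa hbb hne
  simp only [ellP_eq_rP_residueParts (hab₁.le.trans hb₁) hb₁,
    ellP_eq_rP_residueParts (hab₂.le.trans hb₂) hb₂]
  exact stmt_6_general (residueShift_strictMonoOn hab₁ hb₁_lt ha₂ hab₂ hb₂ haa hbb)
    (fun _ _ => residueShift_le) (residueShift_mapsTo ha₂ hab₂ hb₂ haa hbb)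
    (isLeast_residueParts hab₁.le) ha₁ ⟨0, by simp⟩ ht hab₁ hbt hφt
end

section
/- Let d ≥ 1, 1 ≤ a ≤ d+1, and 0 < m_1 < m_2 ≤ 2d+2 be integers. Then: (i) if m_1 = a and m_2 = a+d+1, then h_d^{(a)}(n) − ℓ_{2d+2}^{(m_1,m_2)}(n) → 0 as n → ∞; (ii) if m_1 ≥ a and m_2 ≥ a+d+1 with these two inequalities not both equalities, then h_d^{(a)}(n) − ℓ_{2d+2}^{(m_1,m_2)}(n) → +∞; (iii) if m_1 ≤ a and m_2 ≤ a+d+1 with these two inequalities not both equalities, then h_d^{(a)}(n) − ℓ_{2d+2}^{(m_1,m_2)}(n) → −∞. -/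
open Multiset Finset Filter

/-- `hP d a n`: partitions of perimeter n with d-distinct parts, all parts ≥ a. -/
noncomputable def hP (d a n : ℕ) : ℕ :=
  rP n (fun M => M.Nodup ∧ (∀ x ∈ M, a ≤ x) ∧
    ∀ x ∈ M, ∀ y ∈ M, x ≠ y → d ≤ max x y - min x y)

/-!
A partition of perimeter at least `2` either has no part equal to `1`, and lowering every part by
`1` lowers the perimeter by `1`, or it has such a part, and removing one copy of it lowers the
perimeter by `1`. (In the Ferrers diagram: delete the first column or the last row.) Applied to the
generating functions `H` and `L` of `hP d a` and `ellP (2 * d + 2) m₁ m₂`, this gives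

  `((1 - X) ^ 2 - X ^ (2 * d + 2)) * H = X ^ a * (1 - X) + X ^ (a + d + 1)`,
  `((1 - X) ^ 2 - X ^ (2 * d + 2)) * L = X ^ m₁ * (1 - X) + X ^ m₂`,

the first one because `(1 - X) ^ 2 - X ^ (2 * d + 2)` factors as
`(1 - X - X ^ (d + 1)) * (1 - X + X ^ (d + 1))`. Let `B` be the inverse of the common denominator.
The coefficients of both `(1 - X) * B` and `(1 - X) ^ 2 * B` tend to infinity, hence so do those of
`(X ^ p - X ^ q) * (1 - X) * B` and `(X ^ p - X ^ q) * B` whenever `p < q`, and `H - L` is a sum of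
two such terms.
-/

section Perimeter

open PowerSeries (X coeff)
open scoped PowerSeries

/-! ### Partitions of given perimeter -/

/-- The partitions counted by `rP n P`: those of perimeter `n` satisfying `P`. -/
def partitionsWithPerim (n : ℕ) (P : Multiset ℕ → Prop) : Set (Multiset ℕ) :=
  {M | IsPartition M ∧ perim M = n ∧ P M}

lemma IsPartition.one_le_sup {M : Multiset ℕ} (hM : IsPartition M) : 1 ≤ M.sup := by
  obtain ⟨x, hx⟩ := Multiset.exists_mem_of_ne_zero hM.1
  exact (hM.2 x hx).trans_le (Multiset.le_sup hx)

lemma IsPartition.one_le_card {M : Multiset ℕ} (hM : IsPartition M) : 1 ≤ M.card :=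
  Multiset.card_pos.2 hM.1

lemma IsPartition.one_le_perim {M : Multiset ℕ} (hM : IsPartition M) : 1 ≤ perim M := by
  have := hM.one_le_sup
  have := hM.one_le_card
  unfold perim
  omega

lemma IsPartition.map_succ {M : Multiset ℕ} (hM : IsPartition M) :
    IsPartition (M.map Nat.succ) :=
  ⟨by simpa using hM.1, by simp⟩

lemma IsPartition.cons_one {M : Multiset ℕ} (hM : IsPartition M) : IsPartition (1 ::ₘ M) :=
  ⟨Multiset.cons_ne_zero, by simpa using hM.2⟩

lemma IsPartition.one_notMem_map_succ {M : Multiset ℕ} (hM : IsPartition M) :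
    1 ∉ M.map Nat.succ := by
  simpa using fun h => (hM.2 0 h).ne rfl

lemma IsPartition.exists_map_succ_eq {M : Multiset ℕ} (hM : IsPartition M) (h : 1 ∉ M) :
    ∃ N, IsPartition N ∧ N.map Nat.succ = M := by
  refine ⟨M.map Nat.pred, ⟨by simpa using hM.1, ?_⟩, ?_⟩
  · simp only [Multiset.mem_map, forall_exists_index, and_imp, forall_apply_eq_imp_iff₂]
    intro x hx
    have : x ≠ 1 := fun hx1 => h (hx1 ▸ hx)
    have := hM.2 x hx
    simp only [Nat.pred_eq_sub_one]
    omega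
  · rw [Multiset.map_map]
    exact (Multiset.map_congr rfl fun x hx => Nat.succ_pred_eq_of_pos (hM.2 x hx)).trans
      (Multiset.map_id M)

lemma sup_map_succ {M : Multiset ℕ} (hM : M ≠ 0) : (M.map Nat.succ).sup = M.sup + 1 := by
  induction M using Multiset.induction with
  | empty => exact absurd rfl hM
  | cons x N ih =>
    rcases eq_or_ne N 0 with rfl | hN
    · simp
    · simp only [Multiset.map_cons, Multiset.sup_cons, ih hN]
      omega

lemma IsPartition.perim_map_succ {M : Multiset ℕ} (hM : IsPartition M) :
    perim (M.map Nat.succ) = perim M + 1 := by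
  have := hM.one_le_sup
  rw [perim, perim, sup_map_succ hM.1, Multiset.card_map]
  omega

lemma IsPartition.perim_cons_one {M : Multiset ℕ} (hM : IsPartition M) :
    perim (1 ::ₘ M) = perim M + 1 := by
  have := hM.one_le_sup
  rw [perim, perim, Multiset.sup_cons, Multiset.card_cons, sup_eq_right.2 this]
  omega

lemma IsPartition.perim_eq_one_iff {M : Multiset ℕ} (hM : IsPartition M) :
    perim M = 1 ↔ M = {1} := by
  refine ⟨fun h => ?_, fun h => by simp [h, perim]⟩
  have := hM.one_le_sup
  have := hM.one_le_card
  unfold perim at h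
  obtain ⟨x, rfl⟩ := Multiset.card_eq_one.1 (show M.card = 1 by omega)
  rw [Multiset.sup_singleton, Multiset.card_singleton] at h
  rw [show x = 1 by omega]

lemma partitionsWithPerim_zero (P : Multiset ℕ → Prop) : partitionsWithPerim 0 P = ∅ :=
  Set.eq_empty_of_forall_notMem fun _ hM => Nat.one_le_iff_ne_zero.1 hM.1.one_le_perim hM.2.1

lemma partitionsWithPerim_one (P : Multiset ℕ → Prop) :
    partitionsWithPerim 1 P = {M | M = {1} ∧ P {1}} := by
  ext M
  constructor
  · rintro ⟨hM, h1, hP⟩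
    obtain rfl := hM.perim_eq_one_iff.1 h1
    exact ⟨rfl, hP⟩
  · rintro ⟨rfl, hP⟩
    have h : IsPartition {1} := ⟨by simp, by simp⟩
    exact ⟨h, h.perim_eq_one_iff.2 rfl, hP⟩

lemma partitionsWithPerim_add_two (n : ℕ) (P : Multiset ℕ → Prop) :
    partitionsWithPerim (n + 2) P =
      Multiset.map Nat.succ '' partitionsWithPerim (n + 1) (fun M => P (M.map Nat.succ)) ∪
        Multiset.cons 1 '' partitionsWithPerim (n + 1) (fun M => P (1 ::ₘ M)) := by
  ext M
  constructor
  · rintro ⟨hM, hn, hP⟩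
    by_cases h1 : 1 ∈ M
    · obtain ⟨N, rfl⟩ := Multiset.exists_cons_of_mem h1
      have hN : IsPartition N := by
        refine ⟨?_, fun x hx => hM.2 x (Multiset.mem_cons_of_mem hx)⟩
        rintro rfl
        have : perim {1} = 1 := hM.perim_eq_one_iff.2 rfl
        simp only [Multiset.cons_zero] at hn
        omega
      exact .inr ⟨N, ⟨hN, Nat.succ.inj (hN.perim_cons_one.symm.trans hn), hP⟩, rfl⟩
    · obtain ⟨N, hN, rfl⟩ := hM.exists_map_succ_eq h1
      exact .inl ⟨N, ⟨hN, Nat.succ.inj (hN.perim_map_succ.symm.trans hn), hP⟩, rfl⟩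
  · rintro (⟨N, ⟨hN, hn, hP⟩, rfl⟩ | ⟨N, ⟨hN, hn, hP⟩, rfl⟩)
    · exact ⟨hN.map_succ, by rw [hN.perim_map_succ, hn], hP⟩
    · exact ⟨hN.cons_one, by rw [hN.perim_cons_one, hn], hP⟩

lemma finite_partitionsWithPerim (n : ℕ) (P : Multiset ℕ → Prop) :
    (partitionsWithPerim n P).Finite := by
  induction n using Nat.twoStepInduction generalizing P with
  | zero => simp [partitionsWithPerim_zero]
  | one =>
    rw [partitionsWithPerim_one]
    exact (Set.finite_singleton {1}).subset fun M hM => hM.1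
  | more n _ ih =>
    rw [partitionsWithPerim_add_two]
    exact ((ih _).image _).union ((ih _).image _)

lemma rP_zero (P : Multiset ℕ → Prop) : rP 0 P = 0 := by
  change (partitionsWithPerim 0 P).ncard = 0
  rw [partitionsWithPerim_zero, Set.ncard_empty]

open Classical in
lemma rP_one (P : Multiset ℕ → Prop) : rP 1 P = if P {1} then 1 else 0 := by
  change (partitionsWithPerim 1 P).ncard = _
  rw [partitionsWithPerim_one]
  split_ifs with h <;> simp [h]

lemma rP_add_two (n : ℕ) (P : Multiset ℕ → Prop) :
    rP (n + 2) P =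
      rP (n + 1) (fun M => P (M.map Nat.succ)) + rP (n + 1) (fun M => P (1 ::ₘ M)) := by
  change (partitionsWithPerim (n + 2) P).ncard = _
  rw [partitionsWithPerim_add_two, Set.ncard_union_eq _ ((finite_partitionsWithPerim _ _).image _)
      ((finite_partitionsWithPerim _ _).image _),
    Set.ncard_image_of_injective _ (Multiset.map_injective Nat.succ_injective),
    Set.ncard_image_of_injective _ fun _ _ => (Multiset.cons_inj_right 1).1]
  · rfl
  · rw [Set.disjoint_left]
    rintro _ ⟨M, hM, rfl⟩ ⟨N, -, hN⟩
    exact hM.1.one_notMem_map_succ (hN ▸ Multiset.mem_cons_self 1 N)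

/-! ### Generating functions by perimeter -/

/-- The generating function, by perimeter, of the partitions satisfying `P`. -/
noncomputable def perimSeries (P : Multiset ℕ → Prop) : ℤ⟦X⟧ :=
  PowerSeries.mk fun n => (rP n P : ℤ)

lemma coeff_perimSeries (n : ℕ) (P : Multiset ℕ → Prop) : coeff n (perimSeries P) = rP n P :=
  PowerSeries.coeff_mk _ _

lemma perimSeries_congr {P Q : Multiset ℕ → Prop} (h : ∀ M, IsPartition M → (P M ↔ Q M)) :
    perimSeries P = perimSeries Q := by
  ext n
  have : partitionsWithPerim n P = partitionsWithPerim n Q :=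
    Set.ext fun M => and_congr_right fun hM => and_congr_right fun _ => h M hM
  rw [coeff_perimSeries, coeff_perimSeries]
  exact congrArg (fun s : Set (Multiset ℕ) => (s.ncard : ℤ)) this

lemma perimSeries_false : perimSeries (fun _ => False) = 0 := by
  ext n
  simp [coeff_perimSeries, rP]

open Classical in
lemma perimSeries_eq (P : Multiset ℕ → Prop) :
    perimSeries P = X * ((if P {1} then 1 else 0) + perimSeries (fun M => P (M.map Nat.succ)) +
      perimSeries (fun M => P (1 ::ₘ M))) := by
  ext n
  rcases n with _ | _ | n
  · simp [coeff_perimSeries, rP_zero]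
  · rw [PowerSeries.coeff_succ_X_mul]
    simp only [_root_.map_add, coeff_perimSeries, rP_zero, rP_one, Nat.cast_zero, add_zero,
      zero_add]
    split_ifs <;> simp
  · rw [PowerSeries.coeff_succ_X_mul]
    split_ifs <;> simp [coeff_perimSeries, rP_add_two, PowerSeries.coeff_one]

lemma perimSeries_of_one_notMem {P : Multiset ℕ → Prop} (h : ∀ M, P M → 1 ∉ M) :
    perimSeries P = X * perimSeries (fun M => P (M.map Nat.succ)) := by
  have hcons : (fun M => P (1 ::ₘ M)) = fun _ => False :=
    funext fun M => eq_false fun hM => h _ hM (Multiset.mem_cons_self 1 M)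
  have hone : ¬ P {1} := fun h1 => h _ h1 (Multiset.mem_singleton_self 1)
  rw [perimSeries_eq, hcons, perimSeries_false, if_neg hone, zero_add, add_zero]

lemma perimSeries_of_singleton_one {P : Multiset ℕ → Prop} (h : P {1}) :
    perimSeries P = X * (1 + perimSeries (fun M => P (M.map Nat.succ)) +
      perimSeries (fun M => P (1 ::ₘ M))) := by
  rw [perimSeries_eq, if_pos h]

/-! ### Partitions with parts in a prescribed set -/

/-- The generating function, by perimeter, of the partitions all of whose parts satisfy `S`. -/
noncomputable def partsSeries (S : ℕ → Prop) : ℤ⟦X⟧ :=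
  perimSeries fun M => ∀ x ∈ M, S x

lemma partsSeries_of_not {S : ℕ → Prop} (h : ¬ S 1) :
    partsSeries S = X * partsSeries (fun x => S (x + 1)) := by
  rw [partsSeries, perimSeries_of_one_notMem fun M hM h1 => h (hM 1 h1)]
  simp [partsSeries]

lemma partsSeries_of_one {S : ℕ → Prop} (h : S 1) :
    (1 - X) * partsSeries S = X * (1 + partsSeries (fun x => S (x + 1))) := by
  have := perimSeries_of_singleton_one (P := fun M => ∀ x ∈ M, S x) (by simpa using h)
  simp only [Multiset.mem_map, forall_exists_index, and_imp, forall_apply_eq_imp_iff₂,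
    Nat.succ_eq_add_one, Multiset.mem_cons, forall_eq_or_imp, h, true_and] at this
  unfold partsSeries
  linear_combination this

lemma partsSeries_shift {S : ℕ → Prop} (t : ℕ) (h : ∀ x, 0 < x → x ≤ t → ¬ S x) :
    partsSeries S = X ^ t * partsSeries (fun x => S (x + t)) := by
  induction t with
  | zero => simp
  | succ t ih =>
    rw [ih fun x hx hxt => h x hx (by omega), partsSeries_of_not, pow_succ, mul_assoc]
    · simp only [add_assoc, add_comm 1 t]
    · simpa only [add_comm 1 t] using h (t + 1) t.succ_pos le_rfl

lemma one_sub_X_mul_partsSeries {S : ℕ → Prop} {m : ℕ} (hm : 0 < m) (hS : S m)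
    (hmin : ∀ x, 0 < x → x < m → ¬ S x) :
    (1 - X) * partsSeries S = X ^ m * (1 + partsSeries (fun x => S (x + m))) := by
  obtain ⟨t, rfl⟩ := Nat.exists_eq_add_one.2 hm
  have hone := partsSeries_of_one (S := fun x => S (x + t)) (by rwa [add_comm])
  simp only [add_assoc, add_comm 1 t] at hone
  rw [partsSeries_shift t fun x hx hxt => hmin x hx (by omega), pow_succ]
  linear_combination X ^ t * hone

theorem denom_mul_partsSeries_of_periodic {S : ℕ → Prop} {D m₁ m₂ : ℕ}
    (hper : Function.Periodic S D) (hm₁ : 0 < m₁) (hm : m₁ < m₂) (hm₂ : m₂ ≤ D)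
    (hS : ∀ x, 0 < x → x ≤ D → (S x ↔ x = m₁ ∨ x = m₂)) :
    ((1 - X) ^ 2 - X ^ D) * partsSeries S = X ^ m₁ * (1 - X) + X ^ m₂ := by
  obtain ⟨g, rfl⟩ := Nat.exists_eq_add_of_lt hm
  obtain ⟨e, rfl⟩ := Nat.exists_eq_add_of_le hm₂
  have first := one_sub_X_mul_partsSeries hm₁ ((hS m₁ hm₁ (by omega)).2 (.inl rfl))
    fun x hx hxm => by rw [hS x hx (by omega)]; omega
  have second := one_sub_X_mul_partsSeries (S := fun x => S (x + m₁)) (m := g + 1) g.succ_pos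
    ((hS _ (by omega) (by omega)).2 (.inr (by omega)))
    fun x hx hxm => by rw [hS _ (by omega) (by omega)]; omega
  have period := partsSeries_shift (S := fun x => S (x + (g + 1) + m₁)) e
    fun x hx hxe => by rw [hS _ (by omega) (by omega)]; omega
  have hshift : (fun x => S (x + e + (g + 1) + m₁)) = S := by
    funext x
    rw [← hper x]
    congr 1
    omega
  rw [hshift] at period
  rw [period] at second
  linear_combination (1 - X) * first + X ^ m₁ * second

lemma mod_eq_mod_iff_of_le {D x y : ℕ} (hx : 0 < x) (hxD : x ≤ D) (hy : 0 < y) (hyD : y ≤ D) :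
    x % D = y % D ↔ x = y :=
  (Nat.mod_injOn_Ico 1 D).eq_iff (by simp; omega) (by simp; omega)

/-- The generating function of `ellP D m₁ m₂`. -/
noncomputable def ellSeries (D m₁ m₂ : ℕ) : ℤ⟦X⟧ :=
  partsSeries fun x => x % D = m₁ % D ∨ x % D = m₂ % D

lemma coeff_ellSeries (D m₁ m₂ n : ℕ) : coeff n (ellSeries D m₁ m₂) = ellP D m₁ m₂ n :=
  coeff_perimSeries n _

theorem denom_mul_ellSeries {D m₁ m₂ : ℕ} (hm₁ : 0 < m₁) (hm : m₁ < m₂) (hm₂ : m₂ ≤ D) :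
    ((1 - X) ^ 2 - X ^ D) * ellSeries D m₁ m₂ = X ^ m₁ * (1 - X) + X ^ m₂ := by
  refine denom_mul_partsSeries_of_periodic (fun x => by simp) hm₁ hm hm₂ fun x hx hxD => ?_
  rw [mod_eq_mod_iff_of_le hx hxD hm₁ (by omega), mod_eq_mod_iff_of_le hx hxD (by omega) hm₂]

/-! ### Partitions with `d`-distinct parts -/

/-- The condition counted by `hP d a`: any two parts differ by at least `d`, and all parts are at
least `a`. -/
def IsDistinctFrom (d a : ℕ) (M : Multiset ℕ) : Prop :=
  M.Nodup ∧ (∀ x ∈ M, a ≤ x) ∧ ∀ x ∈ M, ∀ y ∈ M, x ≠ y → d ≤ max x y - min x y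

lemma isDistinctFrom_map_succ {d a : ℕ} {M : Multiset ℕ} :
    IsDistinctFrom d (a + 1) (M.map Nat.succ) ↔ IsDistinctFrom d a M := by
  simp only [IsDistinctFrom, Multiset.nodup_map_iff_of_injective Nat.succ_injective,
    Multiset.mem_map, forall_exists_index, and_imp, forall_apply_eq_imp_iff₂, Nat.succ_eq_add_one,
    max_add_add_right, min_add_add_right, Nat.add_sub_add_right, add_le_add_iff_right, ne_eq,
    add_left_inj]

lemma IsPartition.isDistinctFrom_zero_iff {d : ℕ} {M : Multiset ℕ} (hM : IsPartition M) :
    IsDistinctFrom d 0 M ↔ IsDistinctFrom d 1 M :=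
  and_congr_right fun _ => and_congr_left fun _ => iff_of_true (fun x _ => x.zero_le) hM.2

lemma IsPartition.isDistinctFrom_cons_one {d : ℕ} (hd : 1 ≤ d) {M : Multiset ℕ}
    (hM : IsPartition M) : IsDistinctFrom d 1 (1 ::ₘ M) ↔ IsDistinctFrom d (d + 1) M := by
  constructor
  · rintro ⟨hnodup, -, hdist⟩
    obtain ⟨hone, hnodup⟩ := Multiset.nodup_cons.1 hnodup
    refine ⟨hnodup, fun x hx => ?_, fun x hx y hy =>
      hdist x (Multiset.mem_cons_of_mem hx) y (Multiset.mem_cons_of_mem hy)⟩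
    have := hdist x (Multiset.mem_cons_of_mem hx) 1 (Multiset.mem_cons_self 1 M)
      fun hx1 => hone (hx1 ▸ hx)
    have := hM.2 x hx
    omega
  · rintro ⟨hnodup, hle, hdist⟩
    refine ⟨Multiset.nodup_cons.2 ⟨fun h => ?_, hnodup⟩, hM.cons_one.2, ?_⟩
    · have := hle 1 h
      omega
    · simp only [Multiset.mem_cons]
      rintro x (rfl | hx) y (rfl | hy) hxy
      · exact absurd rfl hxy
      · have := hle y hy
        omega
      · have := hle x hx
        omega
      · exact hdist x hx y hy hxy

/-- The generating function of `hP d a`. -/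
noncomputable def hSeries (d a : ℕ) : ℤ⟦X⟧ :=
  perimSeries (IsDistinctFrom d a)

lemma coeff_hSeries (d a n : ℕ) : coeff n (hSeries d a) = hP d a n :=
  coeff_perimSeries n _

lemma hSeries_succ {d a : ℕ} (ha : 1 ≤ a) : hSeries d (a + 1) = X * hSeries d a := by
  have hone : ∀ M, IsDistinctFrom d (a + 1) M → 1 ∉ M := fun M hM h => by
    have := hM.2.1 1 h
    omega
  rw [hSeries, perimSeries_of_one_notMem hone]
  simp only [isDistinctFrom_map_succ, hSeries]

lemma hSeries_add_one (d a : ℕ) : hSeries d (a + 1) = X ^ a * hSeries d 1 := by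
  induction a with
  | zero => simp
  | succ a ih => rw [hSeries_succ a.succ_pos, ih, pow_succ', mul_assoc]

lemma mul_hSeries_one {d : ℕ} (hd : 1 ≤ d) :
    (1 - X - X ^ (d + 1)) * hSeries d 1 = X := by
  have hsingleton : IsDistinctFrom d 1 {1} := ⟨by simp, by simp, by simp⟩
  have hmap : perimSeries (fun M => IsDistinctFrom d 1 (M.map Nat.succ)) = hSeries d 1 :=
    perimSeries_congr fun M hM => isDistinctFrom_map_succ.trans hM.isDistinctFrom_zero_iff
  have hcons : perimSeries (fun M => IsDistinctFrom d 1 (1 ::ₘ M)) = X ^ d * hSeries d 1 :=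
    (perimSeries_congr fun M hM => hM.isDistinctFrom_cons_one hd).trans (hSeries_add_one d d)
  have hrec := perimSeries_of_singleton_one hsingleton
  rw [hmap, hcons, ← hSeries] at hrec
  linear_combination hrec

theorem denom_mul_hSeries {d a : ℕ} (hd : 1 ≤ d) (ha : 1 ≤ a) :
    ((1 - X) ^ 2 - X ^ (2 * d + 2)) * hSeries d a = X ^ a * (1 - X) + X ^ (a + d + 1) := by
  obtain ⟨p, rfl⟩ := Nat.exists_eq_add_one.2 ha
  rw [hSeries_add_one]
  linear_combination X ^ p * (1 - X + X ^ (d + 1)) * mul_hSeries_one hd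

/-! ### Power series whose coefficients tend to infinity -/

lemma coeff_succ_one_sub_X_mul {R : Type*} [Ring R] (n : ℕ) (F : R⟦X⟧) :
    coeff (n + 1) ((1 - X) * F) = coeff (n + 1) F - coeff n F := by
  rw [sub_mul, one_mul, map_sub, PowerSeries.coeff_succ_X_mul]

lemma tendsto_coeff_X_pow_mul_iff {R : Type*} [Semiring R] {F : R⟦X⟧} {l : Filter R} (k : ℕ) :
    Tendsto (fun n => coeff n (X ^ k * F)) atTop l ↔ Tendsto (fun n => coeff n F) atTop l := by
  rw [← tendsto_add_atTop_iff_nat k]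
  simp only [PowerSeries.coeff_X_pow_mul]

lemma tendsto_coeff_X_pow_sub_X_pow_mul {R : Type*} [Ring R] [PartialOrder R]
    [IsOrderedAddMonoid R] {F : R⟦X⟧}
    (hF : Tendsto (fun n => coeff n ((1 - X) * F)) atTop atTop) {p q : ℕ} (hpq : p < q) :
    Tendsto (fun n => coeff n ((X ^ p - X ^ q) * F)) atTop atTop := by
  have hstep (k : ℕ) : (X ^ k - X ^ (k + 1)) * F = X ^ k * ((1 - X) * F) := by
    rw [← mul_assoc, mul_sub, mul_one, pow_succ]
  induction q, hpq using Nat.le_induction with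
  | base => simpa only [hstep] using (tendsto_coeff_X_pow_mul_iff p).2 hF
  | succ q _ ih =>
    have htelescope : (X ^ p - X ^ (q + 1)) * F =
        (X ^ p - X ^ q) * F + X ^ q * ((1 - X) * F) := by
      rw [← hstep, ← add_mul, sub_add_sub_cancel]
    simpa only [htelescope, _root_.map_add] using
      ih.atTop_add_atTop ((tendsto_coeff_X_pow_mul_iff q).2 hF)

/-- The inverse of the common denominator `(1 - X) ^ 2 - X ^ D` of the generating functions. For
`D = 0` the constant coefficient is not a unit and the value is junk. -/
noncomputable def invDenom (D : ℕ) : ℤ⟦X⟧ :=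
  PowerSeries.invOfUnit ((1 - X) ^ 2 - X ^ D) 1

lemma denom_mul_invDenom {D : ℕ} (hD : D ≠ 0) : ((1 - X) ^ 2 - X ^ D) * invDenom D = 1 :=
  PowerSeries.mul_invOfUnit _ _ (by simp [hD])

lemma one_sub_X_mul_one_sub_X_mul_invDenom {D : ℕ} (hD : D ≠ 0) :
    (1 - X) * ((1 - X) * invDenom D) = 1 + X ^ D * invDenom D := by
  linear_combination denom_mul_invDenom hD

lemma coeff_succ_one_sub_X_mul_invDenom {D : ℕ} (hD : D ≠ 0) (n : ℕ) :
    coeff (n + 1) ((1 - X) * invDenom D) =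
      coeff n ((1 - X) * invDenom D) + coeff (n + 1) (X ^ D * invDenom D) := by
  have h := coeff_succ_one_sub_X_mul n ((1 - X) * invDenom D)
  rw [one_sub_X_mul_one_sub_X_mul_invDenom hD, _root_.map_add, PowerSeries.coeff_one,
    if_neg n.succ_ne_zero] at h
  linarith

lemma one_le_coeff_and_natCast_le_coeff_invDenom {D : ℕ} (hD : D ≠ 0) (n : ℕ) :
    1 ≤ coeff n ((1 - X) * invDenom D) ∧ (n : ℤ) ≤ coeff n (invDenom D) := by
  induction n using Nat.strong_induction_on with
  | _ n ih =>
    cases n with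
    | zero => simp [invDenom]
    | succ n =>
      have hnonneg : 0 ≤ coeff (n + 1) (X ^ D * invDenom D) := by
        rw [PowerSeries.coeff_X_pow_mul']
        split_ifs with h
        · exact (Nat.cast_nonneg _).trans (ih (n + 1 - D) (by omega)).2
        · exact le_rfl
      have hdiff := coeff_succ_one_sub_X_mul n (invDenom D)
      have hrec := coeff_succ_one_sub_X_mul_invDenom hD n
      obtain ⟨hone, hn⟩ := ih n n.lt_succ_self
      constructor
      · linarith
      · push_cast
        linarith

lemma tendsto_coeff_X_pow_mul_invDenom {D : ℕ} (hD : D ≠ 0) :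
    Tendsto (fun n => coeff n (X ^ D * invDenom D)) atTop atTop :=
  (tendsto_coeff_X_pow_mul_iff D).2 <| tendsto_atTop_mono
    (fun n => (one_le_coeff_and_natCast_le_coeff_invDenom hD n).2) tendsto_natCast_atTop_atTop

lemma tendsto_coeff_one_sub_X_mul_invDenom {D : ℕ} (hD : D ≠ 0) :
    Tendsto (fun n => coeff n ((1 - X) * invDenom D)) atTop atTop := by
  have h := tendsto_coeff_X_pow_mul_invDenom hD
  rw [← tendsto_add_atTop_iff_nat 1] at h ⊢
  refine tendsto_atTop_mono (fun n => ?_) h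
  rw [coeff_succ_one_sub_X_mul_invDenom hD]
  linarith [(one_le_coeff_and_natCast_le_coeff_invDenom hD n).1]

lemma tendsto_coeff_one_sub_X_mul_one_sub_X_mul_invDenom {D : ℕ} (hD : D ≠ 0) :
    Tendsto (fun n => coeff n ((1 - X) * ((1 - X) * invDenom D))) atTop atTop := by
  refine tendsto_atTop_mono (fun n => ?_) (tendsto_coeff_X_pow_mul_invDenom hD)
  rw [one_sub_X_mul_one_sub_X_mul_invDenom hD, _root_.map_add, PowerSeries.coeff_one]
  split_ifs <;> simp

lemma eq_invDenom_mul {D : ℕ} (hD : D ≠ 0) {F G : ℤ⟦X⟧}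
    (h : ((1 - X) ^ 2 - X ^ D) * F = G) :
    F = invDenom D * G := by
  linear_combination invDenom D * h - F * denom_mul_invDenom hD

theorem tendsto_coeff_sub_coeff_of_denom_mul_eq {D : ℕ} (hD : D ≠ 0)
    {F G : ℤ⟦X⟧} {p q r s : ℕ}
    (hF : ((1 - X) ^ 2 - X ^ D) * F = X ^ p * (1 - X) + X ^ r)
    (hG : ((1 - X) ^ 2 - X ^ D) * G = X ^ q * (1 - X) + X ^ s)
    (hpq : p ≤ q) (hrs : r ≤ s) (hne : ¬ (p = q ∧ r = s)) :
    Tendsto (fun n => coeff n F - coeff n G) atTop atTop := by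
  have hFG : F - G = (X ^ p - X ^ q) * ((1 - X) * invDenom D) + (X ^ r - X ^ s) * invDenom D := by
    rw [eq_invDenom_mul hD hF, eq_invDenom_mul hD hG]
    ring
  have hA {p q : ℕ} (h : p < q) := tendsto_coeff_X_pow_sub_X_pow_mul
    (tendsto_coeff_one_sub_X_mul_one_sub_X_mul_invDenom hD) h
  have hB {r s : ℕ} (h : r < s) := tendsto_coeff_X_pow_sub_X_pow_mul
    (tendsto_coeff_one_sub_X_mul_invDenom hD) h
  simp only [← map_sub, hFG]
  rcases hpq.eq_or_lt with rfl | hpq <;> rcases hrs.eq_or_lt with rfl | hrs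
  · exact absurd ⟨rfl, rfl⟩ hne
  · simpa only [sub_self, zero_mul, zero_add] using hB hrs
  · simpa only [sub_self, zero_mul, add_zero] using hA hpq
  · simpa only [_root_.map_add] using (hA hpq).atTop_add_atTop (hB hrs)

/-! ### Comparison of `hP` and `ellP` -/

theorem stmt_7_general {d a m₁ m₂ : ℕ} (hd : 1 ≤ d) (ha : 1 ≤ a)
    (hm₁ : 0 < m₁) (hm : m₁ < m₂) (hm₂ : m₂ ≤ 2 * d + 2) :
    (m₁ = a ∧ m₂ = a + d + 1 → ∀ n, hP d a n = ellP (2 * d + 2) m₁ m₂ n) ∧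
    (a ≤ m₁ ∧ a + d + 1 ≤ m₂ ∧ ¬(m₁ = a ∧ m₂ = a + d + 1) →
      Tendsto (fun n => (hP d a n : ℤ) - (ellP (2 * d + 2) m₁ m₂ n : ℤ)) atTop atTop) ∧
    (m₁ ≤ a ∧ m₂ ≤ a + d + 1 ∧ ¬(m₁ = a ∧ m₂ = a + d + 1) →
      Tendsto (fun n => (hP d a n : ℤ) - (ellP (2 * d + 2) m₁ m₂ n : ℤ)) atTop atBot) := by
  have hD : 2 * d + 2 ≠ 0 := by omega
  have hH := denom_mul_hSeries hd ha
  have hL := denom_mul_ellSeries hm₁ hm hm₂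
  simp only [← coeff_hSeries, ← coeff_ellSeries]
  refine ⟨?_, ?_, ?_⟩
  · rintro ⟨rfl, rfl⟩ n
    rw [← Nat.cast_inj (R := ℤ), ← coeff_hSeries, ← coeff_ellSeries, eq_invDenom_mul hD hH,
      eq_invDenom_mul hD hL]
  · rintro ⟨h₁, h₂, hne⟩
    exact tendsto_coeff_sub_coeff_of_denom_mul_eq hD hH hL h₁ h₂ (by omega)
  · rintro ⟨h₁, h₂, hne⟩
    rw [← tendsto_neg_atTop_iff]
    simpa only [neg_sub] using tendsto_coeff_sub_coeff_of_denom_mul_eq hD hL hH h₁ h₂ hne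

end Perimeter

theorem stmt_7 (d a m₁ m₂ : ℕ) (hd : 1 ≤ d) (ha1 : 1 ≤ a) (ha2 : a ≤ d + 1)
    (hm₁ : 0 < m₁) (hm : m₁ < m₂) (hm₂ : m₂ ≤ 2 * d + 2) :
    (m₁ = a ∧ m₂ = a + d + 1 →
      Tendsto (fun n => (hP d a n : ℤ) - (ellP (2 * d + 2) m₁ m₂ n : ℤ)) atTop
        (nhds 0)) ∧
    (a ≤ m₁ ∧ a + d + 1 ≤ m₂ ∧ ¬(m₁ = a ∧ m₂ = a + d + 1) →
      Tendsto (fun n => (hP d a n : ℤ) - (ellP (2 * d + 2) m₁ m₂ n : ℤ)) atTop atTop) ∧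
    (m₁ ≤ a ∧ m₂ ≤ a + d + 1 ∧ ¬(m₁ = a ∧ m₂ = a + d + 1) →
      Tendsto (fun n => (hP d a n : ℤ) - (ellP (2 * d + 2) m₁ m₂ n : ℤ)) atTop atBot) := by
  obtain ⟨heq, hlim⟩ := stmt_7_general hd ha1 hm₁ hm hm₂
  exact ⟨fun h => by simp [heq h], hlim⟩
end
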